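/- For every real ε > 0 and every graph H on h vertices, there exist reals γ, δ > 0 such that if G is a graph containing fewer than γ|G|^h induced labelled copies of H, then there exists X ⊆ V(G) with |X| ≥ δ|G| such that one of G[X], Ḡ[X] has maximum degree at most εδ|G|. -/

import Mathlib

open SimpleGraph

/-- The independence (stable set) number of a graph: the clique number of the complement. -/
noncomputable def alphaNum {V : Type*} (G : SimpleGraph V) : ℕ := Gᶜ.cliqueNum

/-- The clique number of a graph. -/
noncomputable def omegaNum {V : Type*} (G : SimpleGraph V) : ℕ := G.cliqueNum

/-- κ(G) = α(G)·ω(G). -/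
noncomputable def kappaNum {V : Type*} (G : SimpleGraph V) : ℕ := alphaNum G * omegaNum G

open Finset

section

variable {V : Type*}

open Classical in
/-- The neighbours of `v` in `G` that lie in `B`. -/
noncomputable def nbrsIn (G : SimpleGraph V) (v : V) (B : Finset V) : Finset V :=
  B.filter (G.Adj v)

/-- The number of ordered adjacent pairs in `X × Y`. -/
noncomputable def adjPairs (G : SimpleGraph V) (X Y : Finset V) : ℕ :=
  ∑ v ∈ X, #(nbrsIn G v Y)

lemma mem_nbrsIn {G : SimpleGraph V} {v x : V} {B : Finset V} :
    x ∈ nbrsIn G v B ↔ x ∈ B ∧ G.Adj v x := by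
  simp [nbrsIn]

lemma nbrsIn_subset (G : SimpleGraph V) (v : V) (B : Finset V) : nbrsIn G v B ⊆ B :=
  fun _ hx => (mem_nbrsIn.1 hx).1

lemma adjPairs_comm (G : SimpleGraph V) (X Y : Finset V) :
    adjPairs G X Y = adjPairs G Y X := by
  classical
  simp only [adjPairs, nbrsIn, card_filter]
  rw [sum_comm]
  refine sum_congr rfl fun x _ => sum_congr rfl fun y _ => ?_
  simp only [G.adj_comm]

open Classical in
lemma adjPairs_union_self (G : SimpleGraph V) {X Y : Finset V} (hXY : Disjoint X Y) :
    adjPairs G (X ∪ Y) (X ∪ Y) = adjPairs G X X + adjPairs G Y Y + 2 * adjPairs G Y X := by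
  have hsplit : ∀ v, #(nbrsIn G v (X ∪ Y)) = #(nbrsIn G v X) + #(nbrsIn G v Y) := by
    intro v
    rw [nbrsIn, filter_union, card_union_of_disjoint (disjoint_filter_filter hXY)]
    rfl
  have hcomm := adjPairs_comm G X Y
  unfold adjPairs at *
  rw [sum_union hXY]
  simp only [hsplit, sum_add_distrib]
  omega

lemma adjPairs_self_le (G : SimpleGraph V) (X : Finset V) :
    (adjPairs G X X : ℝ) ≤ #X * (#X - 1) := by
  classical
  have hdeg : ∀ v ∈ X, (#(nbrsIn G v X) : ℝ) ≤ #X - 1 := by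
    intro v hv
    have hsub : nbrsIn G v X ⊆ X.erase v := by
      intro x hx
      rw [mem_nbrsIn] at hx
      exact mem_erase.2 ⟨hx.2.ne', hx.1⟩
    have hcard := card_le_card hsub
    have herase := card_erase_add_one hv
    rw [le_sub_iff_add_le]
    exact_mod_cast (by omega : #(nbrsIn G v X) + 1 ≤ #X)
  have hsum := sum_le_card_nsmul X _ _ hdeg
  simpa [adjPairs] using hsum

open Classical in
/-- If on average the vertices of `X` have at most `D` neighbours in `Y`, then at least half of
them have at most `2 * D` neighbours in `Y`. -/
lemma half_card_le_card_filter (G : SimpleGraph V) (X Y : Finset V) {D : ℝ} (hD : 0 < D)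
    (h : (adjPairs G X Y : ℝ) ≤ D * #X) :
    (#X : ℝ) / 2 ≤ #(X.filter fun v => (#(nbrsIn G v Y) : ℝ) ≤ 2 * D) := by
  have hsplit := card_filter_add_card_filter_not (s := X)
    (fun v => (#(nbrsIn G v Y) : ℝ) ≤ 2 * D)
  set good := X.filter fun v => (#(nbrsIn G v Y) : ℝ) ≤ 2 * D
  set bad := X.filter fun v => ¬ (#(nbrsIn G v Y) : ℝ) ≤ 2 * D
  have hlow : (#bad : ℝ) * (2 * D) ≤ adjPairs G X Y := by
    have hle : ∀ v ∈ bad, 2 * D ≤ (#(nbrsIn G v Y) : ℝ) := by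
      intro v hv
      exact (not_le.1 (mem_filter.1 hv).2).le
    have hsum := card_nsmul_le_sum bad _ _ hle
    rw [nsmul_eq_mul] at hsum
    refine hsum.trans ?_
    rw [adjPairs, Nat.cast_sum]
    exact sum_le_sum_of_subset_of_nonneg (filter_subset _ _) fun _ _ _ => Nat.cast_nonneg _
  have hsplit' : (#good : ℝ) + #bad = #X := by exact_mod_cast hsplit
  have : (#bad : ℝ) * 2 ≤ #X := by
    refine le_of_mul_le_mul_right ?_ hD
    linarith
  linarith

open Classical in
/-- If no two large subsets of `S` form a sparse pair for any of the graphs `C b`, then every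
pattern `χ` is realised by many maps into prescribed large subsets of `S`. -/
lemma pow_le_card_patterns [Fintype V] (C : Bool → SimpleGraph V) {S : Finset V} {a ρ : ℝ}
    (ha : 0 < a) (hρ : 0 < ρ) (hρ_le : ρ ≤ 1)
    (hS : ∀ b, ∀ A ⊆ S, ∀ B ⊆ S, a ≤ #A → a ≤ #B →
      ∃ v ∈ A, ρ * #B < #(nbrsIn (C b) v B)) :
    ∀ (h : ℕ) (χ : Fin h → Fin h → Bool) (U : Fin h → Finset V) (u : ℝ),
      (∀ i, U i ⊆ S) → (∀ i, u ≤ #(U i)) → (h + 1) * a ≤ ρ ^ h * u →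
      a ^ h ≤ #(univ.filter fun f : Fin h → V =>
        (∀ i, f i ∈ U i) ∧ ∀ i j, i < j → (C (χ i j)).Adj (f i) (f j)) := by
  intro h
  induction h with
  | zero =>
    intro χ U u _ _ _
    simp
  | succ h ih =>
    intro χ U u hUS hUu hu
    have hu0 : 0 < u := by
      by_contra! hneg
      have h1 : ρ ^ (h + 1) * u ≤ 0 := mul_nonpos_of_nonneg_of_nonpos (by positivity) hneg
      have h2 : 0 < ((h + 1 : ℕ) + 1 : ℝ) * a := by positivity
      linarith
    have hua : ((h + 1 : ℕ) + 1 : ℝ) * a ≤ u :=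
      hu.trans (mul_le_of_le_one_left hu0.le (pow_le_one₀ hρ.le hρ_le))
    push_cast at hua
    have hha : 0 ≤ (h : ℝ) * a := by positivity
    set bad : Fin h → Finset V := fun j => (U 0).filter fun v =>
      (#(nbrsIn (C (χ 0 j.succ)) v (U j.succ)) : ℝ) ≤ ρ * #(U j.succ)
    have hbad : ∀ j, (#(bad j) : ℝ) ≤ a := by
      intro j
      by_contra! hlt
      obtain ⟨v, hv, hvlt⟩ := hS (χ 0 j.succ) (bad j)
        ((filter_subset _ _).trans (hUS 0)) (U j.succ) (hUS _) hlt.le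
        (le_trans (by linarith) (hUu j.succ))
      exact absurd (mem_filter.1 hv).2 (not_le.2 hvlt)
    set good := U 0 \ univ.biUnion bad with hgood_def
    have hgood : a ≤ #good := by
      have h1 : #(U 0) ≤ #good + #(univ.biUnion bad) := by
        have := le_card_sdiff (univ.biUnion bad) (U 0)
        rw [← hgood_def] at this
        omega
      have h2 : #(univ.biUnion bad) ≤ ∑ j, #(bad j) := card_biUnion_le
      have h3 : ∑ j, (#(bad j) : ℝ) ≤ h * a := by
        have := sum_le_card_nsmul univ (fun j => (#(bad j) : ℝ)) a fun j _ => hbad j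
        simpa using this
      have h4 : (#(U 0) : ℝ) ≤ #good + ∑ j, (#(bad j) : ℝ) := by
        exact_mod_cast h1.trans (Nat.add_le_add_left h2 _)
      have h5 := hUu 0
      linarith
    set F : V → Finset (Fin h → V) := fun v => univ.filter fun f : Fin h → V =>
      (∀ i, f i ∈ nbrsIn (C (χ 0 i.succ)) v (U i.succ)) ∧
        ∀ i j, i < j → (C (χ i.succ j.succ)).Adj (f i) (f j)
    have hF : ∀ v ∈ good, a ^ h ≤ #(F v) := by
      intro v hv
      refine ih (fun i j => χ i.succ j.succ) _ (ρ * u)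
        (fun i => (nbrsIn_subset _ _ _).trans (hUS _)) ?_ ?_
      · intro i
        rw [hgood_def, mem_sdiff] at hv
        have hvi : v ∉ bad i := fun hmem => hv.2 (mem_biUnion.2 ⟨i, mem_univ _, hmem⟩)
        have hlt : ρ * #(U i.succ) < #(nbrsIn (C (χ 0 i.succ)) v (U i.succ)) := by
          by_contra! hle
          exact hvi (mem_filter.2 ⟨hv.1, hle⟩)
        exact (mul_le_mul_of_nonneg_left (hUu _) hρ.le).trans hlt.le
      · rw [pow_succ] at hu
        push_cast at hu
        linarith
    have hinj : #(good.sigma F) ≤ #(univ.filter fun f : Fin (h + 1) → V =>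
        (∀ i, f i ∈ U i) ∧ ∀ i j, i < j → (C (χ i j)).Adj (f i) (f j)) := by
      refine card_le_card_of_injOn (fun p => Fin.cons p.1 p.2) ?_ ?_
      · rintro ⟨v, f⟩ hp
        obtain ⟨hv, hf⟩ := mem_sigma.1 hp
        obtain ⟨hfU, hfC⟩ := (mem_filter.1 hf).2
        simp only [mem_nbrsIn] at hfU
        refine mem_filter.2 ⟨mem_univ _, ?_, ?_⟩
        · intro i
          refine Fin.cases ?_ (fun i => ?_) i
          · exact (mem_sdiff.1 hv).1
          · exact (hfU i).1
        · intro i j hij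
          induction j using Fin.cases with
          | zero => exact absurd hij (Fin.not_lt_zero i)
          | succ j =>
            induction i using Fin.cases with
            | zero => exact (hfU j).2
            | succ i => exact hfC i j (Fin.succ_lt_succ_iff.1 hij)
      · rintro ⟨v, f⟩ _ ⟨w, g⟩ _ hvw
        obtain ⟨rfl, rfl⟩ := Fin.cons_inj.1 hvw
        rfl
    calc a ^ (h + 1) = a * a ^ h := pow_succ' a h
      _ ≤ #good * a ^ h := by gcongr
      _ ≤ ∑ v ∈ good, (#(F v) : ℝ) := by
        simpa using card_nsmul_le_sum good (fun v => (#(F v) : ℝ)) (a ^ h) hF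
      _ = #(good.sigma F) := by rw [card_sigma]; push_cast; rfl
      _ ≤ _ := by exact_mod_cast hinj

/-- `Y` has `s * m` vertices and at most `s * m * q + κ * (s * m) ^ 2` ordered adjacent pairs:
the shape of a union of `s` blocks of size `m` with density at most `κ` between blocks. -/
structure IsSparseUnion (G : SimpleGraph V) (m : ℕ) (q κ : ℝ) (s : ℕ) (Y : Finset V) :
    Prop where
  card_eq : #Y = s * m
  adjPairs_le : (adjPairs G Y Y : ℝ) ≤ s * m * q + κ * (s * m) ^ 2

open Classical in
lemma IsSparseUnion.union {G : SimpleGraph V} {m : ℕ} {q κ : ℝ} {s t : ℕ} {Y Z : Finset V}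
    (hY : IsSparseUnion G m q κ s Y) (hZ : IsSparseUnion G m q κ t Z) (hYZ : Disjoint Y Z)
    (hdeg : ∀ v ∈ Z, (#(nbrsIn G v Y) : ℝ) ≤ κ * #Y) :
    IsSparseUnion G m q κ (s + t) (Y ∪ Z) := by
  refine ⟨?_, ?_⟩
  · rw [card_union_of_disjoint hYZ, hY.card_eq, hZ.card_eq, add_mul]
  · have hsum := sum_le_card_nsmul Z (fun v => (#(nbrsIn G v Y) : ℝ)) _ hdeg
    rw [nsmul_eq_mul, hY.card_eq, hZ.card_eq] at hsum
    have hcross : (adjPairs G Z Y : ℝ) ≤ t * m * (κ * (s * m)) := by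
      rw [adjPairs, Nat.cast_sum]
      exact_mod_cast hsum
    have h1 := hY.adjPairs_le
    have h2 := hZ.adjPairs_le
    rw [adjPairs_union_self G hYZ]
    push_cast
    nlinarith

/-- If every large set contains a sparse pair for one of the graphs `C b`, then every large set
contains a sparse union for each of the two graphs, with large product of the numbers of blocks
(unless one of these numbers already is at least `k`). -/
lemma exists_isSparseUnion (C : Bool → SimpleGraph V) {c ρ q : ℝ} {m k : ℕ}
    (hc : 0 < c) (hc_le : c ≤ 1) (hρ : 0 < ρ) (hm : 0 < m) (hk : 0 < k)
    (hqm : q ≤ m) (hmq : (m : ℝ) - 1 ≤ q)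
    (hpair : ∀ S : Finset V, q ≤ c * #S → ∃ b, ∃ A ⊆ S, ∃ B ⊆ S, c * #S ≤ #A ∧ c * #S ≤ #B ∧
      ∀ v ∈ A, (#(nbrsIn (C b) v B) : ℝ) ≤ ρ * #B) :
    ∀ (d : ℕ) (S : Finset V), (4 / c) ^ d * (4 * k * m) ≤ #S → ∀ b : Bool,
      ∃ s t : ℕ, ∃ Y ⊆ S, ∃ Z ⊆ S, 0 < s ∧ 0 < t ∧ s ≤ 2 * k ∧ t ≤ 2 * k ∧
        IsSparseUnion (C b) m q (2 * ρ) s Y ∧ IsSparseUnion (C (!b)) m q (2 * ρ) t Z ∧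
        (k ≤ s ∨ k ≤ t ∨ 2 ^ d ≤ s * t) := by
  classical
  have hm' : (1 : ℝ) ≤ m := by exact_mod_cast hm
  have hk' : (1 : ℝ) ≤ k := by exact_mod_cast hk
  have hkm : (m : ℝ) ≤ k * m := le_mul_of_one_le_left (by positivity) hk'
  intro d
  induction d with
  | zero =>
    intro S hS b
    have hmS : m ≤ #S := by
      have : (m : ℝ) ≤ #S := by rw [pow_zero] at hS; nlinarith
      exact_mod_cast this
    obtain ⟨Y, hYS, hYm⟩ := exists_subset_card_eq hmS
    have hY : ∀ b, IsSparseUnion (C b) m q (2 * ρ) 1 Y := by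
      intro b
      refine ⟨by simp [hYm], (adjPairs_self_le _ _).trans ?_⟩
      rw [hYm]
      have h1 : (m : ℝ) * (m - 1) ≤ m * q := by gcongr
      have h2 : 0 ≤ 2 * ρ * ((1 : ℕ) * m : ℝ) ^ 2 := by positivity
      push_cast at *
      linarith
    exact ⟨1, 1, Y, hYS, Y, hYS, one_pos, one_pos, by omega, by omega, hY _, hY _,
      Or.inr (Or.inr (by simp))⟩
  | succ d ih =>
    intro S hS
    have hpow : (1 : ℝ) ≤ (4 / c) ^ d := one_le_pow₀ (by rw [le_div_iff₀ hc]; linarith)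
    have hlarge : 4 * ((4 / c) ^ d * (4 * k * m)) ≤ c * #S := by
      rw [pow_succ] at hS
      calc 4 * ((4 / c) ^ d * (4 * k * m)) = c * ((4 / c) ^ d * (4 / c) * (4 * k * m)) := by
            field_simp
        _ ≤ c * #S := by gcongr
    have hbase : (4 * k * m : ℝ) ≤ (4 / c) ^ d * (4 * k * m) :=
      le_mul_of_one_le_left (by positivity) hpow
    obtain ⟨b, A, hAS, B, hBS, hA, hB, hAB⟩ := hpair S (by nlinarith)
    suffices key : ∃ s t : ℕ, ∃ Y ⊆ S, ∃ Z ⊆ S, 0 < s ∧ 0 < t ∧ s ≤ 2 * k ∧ t ≤ 2 * k ∧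
        IsSparseUnion (C b) m q (2 * ρ) s Y ∧ IsSparseUnion (C (!b)) m q (2 * ρ) t Z ∧
        (k ≤ s ∨ k ≤ t ∨ 2 ^ (d + 1) ≤ s * t) by
      intro b'
      obtain rfl | rfl : b' = b ∨ b' = !b := by cases b <;> cases b' <;> simp
      · exact key
      · obtain ⟨s, t, Y, hY, Z, hZ, hs, ht, hsk, htk, hYs, hZt, hst⟩ := key
        refine ⟨t, s, Z, hZ, Y, hY, ht, hs, htk, hsk, hZt, by simpa using hYs, ?_⟩
        rw [mul_comm t s]
        tauto
    obtain ⟨s, t, Y, hYA, Z, hZA, hs, ht, hsk, htk, hY, hZ, hst⟩ := ih A (by nlinarith) b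
    by_cases hdone : k ≤ s ∨ k ≤ t
    · exact ⟨s, t, Y, hYA.trans hAS, Z, hZA.trans hAS, hs, ht, hsk, htk, hY, hZ, by tauto⟩
    push Not at hdone
    replace hst : 2 ^ d ≤ s * t := by omega
    have hYcard : (#Y : ℝ) = s * m := by rw [hY.card_eq]; push_cast; rfl
    have hYpos : (0 : ℝ) < #Y := by
      rw [hYcard]
      positivity
    set B₀ := B.filter fun v => (#(nbrsIn (C b) v Y) : ℝ) ≤ 2 * (ρ * #Y)
    have hB₀ : (#B : ℝ) / 2 ≤ #B₀ := by
      refine half_card_le_card_filter (C b) B Y (by positivity) ?_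
      rw [adjPairs_comm, adjPairs, Nat.cast_sum]
      have := sum_le_card_nsmul Y (fun v => (#(nbrsIn (C b) v B) : ℝ)) _
        fun v hv => hAB v (hYA hv)
      rw [nsmul_eq_mul] at this
      linarith
    have hsdiff : (#B₀ : ℝ) ≤ #(B₀ \ Y) + #Y := by
      have := le_card_sdiff Y B₀
      exact_mod_cast (by omega : #B₀ ≤ #(B₀ \ Y) + #Y)
    have hYle : (#Y : ℝ) ≤ k * m := by
      rw [hYcard]
      gcongr
      exact hdone.1.le
    have hsub : B₀ \ Y ⊆ S := (sdiff_subset.trans (filter_subset _ _)).trans hBS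
    obtain ⟨s', t', Y', hYB, Z', hZB, hs', ht', hsk', htk', hY', hZ', hst'⟩ :=
      ih (B₀ \ Y) (by nlinarith) b
    by_cases hdone' : k ≤ s' ∨ k ≤ t'
    · exact ⟨s', t', Y', hYB.trans hsub, Z', hZB.trans hsub, hs', ht', hsk', htk', hY', hZ',
        by tauto⟩
    push Not at hdone'
    replace hst' : 2 ^ d ≤ s' * t' := by omega
    have hunion : IsSparseUnion (C b) m q (2 * ρ) (s + s') (Y ∪ Y') := by
      refine hY.union hY' (disjoint_of_subset_right hYB disjoint_sdiff) fun v hv => ?_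
      have := (mem_filter.1 (mem_sdiff.1 (hYB hv)).1).2
      linarith
    have hunion_sub : Y ∪ Y' ⊆ S := union_subset (hYA.trans hAS) (hYB.trans hsub)
    rcases le_total t t' with htt | htt
    · refine ⟨s + s', t', Y ∪ Y', hunion_sub, Z', hZB.trans hsub, by omega, ht', by omega, htk',
        hunion, hZ', Or.inr (Or.inr ?_)⟩
      rw [pow_succ, add_mul]
      have := Nat.mul_le_mul_left s htt
      omega
    · refine ⟨s + s', t, Y ∪ Y', hunion_sub, Z, hZA.trans hAS, by omega, ht, by omega, htk,
        hunion, hZ, Or.inr (Or.inr ?_)⟩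
      rw [pow_succ, add_mul]
      have := Nat.mul_le_mul_left s' htt
      omega

/-- The graph `G` for `true` and its complement for `false`. -/
def graphOrCompl (G : SimpleGraph V) (b : Bool) : SimpleGraph V := bif b then G else Gᶜ

open Classical in
/-- A pattern of adjacencies and non-adjacencies prescribed by `H` gives an induced copy. -/
lemma card_patterns_le_card_copies [Fintype V] {W : Type*} [Fintype W] (H : SimpleGraph W)
    (G : SimpleGraph V) (e : W ≃ Fin (Fintype.card W)) :
    #(univ.filter fun f : Fin (Fintype.card W) → V => ∀ i j, i < j →
        (graphOrCompl G (decide (H.Adj (e.symm i) (e.symm j)))).Adj (f i) (f j)) ≤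
    Nat.card {φ : W ↪ V // ∀ u w : W, G.Adj (φ u) (φ w) ↔ H.Adj u w} := by
  rw [← Fintype.card_subtype, ← Nat.card_eq_fintype_card]
  have hlt : ∀ f : Fin (Fintype.card W) → V, (∀ i j, i < j →
      (graphOrCompl G (decide (H.Adj (e.symm i) (e.symm j)))).Adj (f i) (f j)) →
      ∀ i j, i < j → f i ≠ f j ∧ (G.Adj (f i) (f j) ↔ H.Adj (e.symm i) (e.symm j)) := by
    intro f hf i j hij
    have hadj := hf i j hij
    refine ⟨hadj.ne, ?_⟩
    by_cases hH : H.Adj (e.symm i) (e.symm j)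
    · simpa [graphOrCompl, hH] using hadj
    · simp only [graphOrCompl, hH, decide_false, cond_false, SimpleGraph.compl_adj] at hadj
      simp [hH, hadj.2]
  have hne : ∀ f : Fin (Fintype.card W) → V, (∀ i j, i < j →
      (graphOrCompl G (decide (H.Adj (e.symm i) (e.symm j)))).Adj (f i) (f j)) →
      ∀ i j, i ≠ j → f i ≠ f j ∧ (G.Adj (f i) (f j) ↔ H.Adj (e.symm i) (e.symm j)) := by
    intro f hf i j hij
    rcases lt_or_gt_of_ne hij with h | h
    · exact hlt f hf i j h
    · rw [G.adj_comm, H.adj_comm, ne_comm]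
      exact hlt f hf j i h
  refine Nat.card_le_card_of_injective (fun f => ⟨⟨fun w => f.1 (e w), ?_⟩, ?_⟩) ?_
  · intro u w huw
    by_contra huw'
    exact (hne f.1 f.2 (e u) (e w) (e.injective.ne huw')).1 huw
  · intro u w
    by_cases huw : u = w
    · simp [huw]
    · have hadj := (hne f.1 f.2 (e u) (e w) (e.injective.ne huw)).2
      rwa [e.symm_apply_apply, e.symm_apply_apply] at hadj
  · intro f g hfg
    ext i
    have hi : f.1 (e (e.symm i)) = g.1 (e (e.symm i)) :=
      DFunLike.congr_fun (Subtype.ext_iff.1 hfg) (e.symm i)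
    rwa [e.apply_symm_apply] at hi

/-- If `G` has few induced copies of `H`, then every large set contains a sparse pair in `G` or
in its complement. -/
lemma exists_sparse_pair [Fintype V] {W : Type*} [Fintype W] (H : SimpleGraph W)
    (G : SimpleGraph V) {ρ q : ℝ} (hρ : 0 < ρ) (hρ_le : ρ ≤ 1) (hq : 0 < q)
    (hcopies : (Nat.card {φ : W ↪ V // ∀ u w : W, G.Adj (φ u) (φ w) ↔ H.Adj u w} : ℝ) <
      q ^ Fintype.card W) (S : Finset V)
    (hS : q ≤ ρ ^ Fintype.card W / (Fintype.card W + 1) * #S) :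
    ∃ b, ∃ A ⊆ S, ∃ B ⊆ S, ρ ^ Fintype.card W / (Fintype.card W + 1) * #S ≤ #A ∧
      ρ ^ Fintype.card W / (Fintype.card W + 1) * #S ≤ #B ∧
      ∀ v ∈ A, (#(nbrsIn (graphOrCompl G b) v B) : ℝ) ≤ ρ * #B := by
  classical
  by_contra! hno
  set a := ρ ^ Fintype.card W / (Fintype.card W + 1) * #S with ha
  have e := Fintype.equivFin W
  have hcount := pow_le_card_patterns (graphOrCompl G) (hq.trans_le hS) hρ hρ_le hno
    (Fintype.card W) (fun i j => decide (H.Adj (e.symm i) (e.symm j))) (fun _ => S) #S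
    (fun _ => subset_rfl) (fun _ => le_rfl) (by rw [ha]; field_simp; rfl)
  have hmono : q ^ Fintype.card W ≤ a ^ Fintype.card W := by gcongr
  refine absurd hcopies (not_lt.2 (hmono.trans (hcount.trans ?_)))
  refine le_trans ?_ (Nat.cast_le.2 (card_patterns_le_card_copies H G e))
  refine Nat.cast_le.2 (card_le_card fun f hf => ?_)
  simp only [mem_filter, mem_univ, true_and] at hf ⊢
  exact hf.2

end

/-- Nikiforov's theorem (degree form): for every `ε > 0` and graph `H` on `h` vertices
there are `γ, δ > 0` such that every graph `G` with fewer than `γ|G|^h` induced labelled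
copies of `H` has a subset `X` with `|X| ≥ δ|G|` such that one of `G[X]`, `Ḡ[X]` has
maximum degree at most `εδ|G|`. -/
theorem stmt_14 (ε : ℝ) (hε : 0 < ε) {W : Type*} [Fintype W] (H : SimpleGraph W) :
    ∃ γ δ : ℝ, 0 < γ ∧ 0 < δ ∧
      ∀ (V : Type) [Fintype V] [DecidableEq V] (G : SimpleGraph V) [DecidableRel G.Adj],
        ((Nat.card {φ : W ↪ V // ∀ u w : W, G.Adj (φ u) (φ w) ↔ H.Adj u w} : ℝ) <
          γ * (Fintype.card V : ℝ) ^ (Fintype.card W)) →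
        ∃ X : Finset V, δ * (Fintype.card V : ℝ) ≤ (X.card : ℝ) ∧
          ((∀ v ∈ X, ((X.filter (G.Adj v)).card : ℝ) ≤ ε * δ * (Fintype.card V : ℝ)) ∨
           (∀ v ∈ X, ((X.filter (Gᶜ.Adj v)).card : ℝ) ≤ ε * δ * (Fintype.card V : ℝ))) := by
  obtain ⟨k, hkε⟩ := exists_nat_gt (10 / ε)
  have hk' : (0 : ℝ) < k := (by positivity : 0 < 10 / ε).trans hkε
  have hk : 0 < k := by exact_mod_cast hk'
  have hk1 : (1 : ℝ) ≤ k := by exact_mod_cast hk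
  rw [div_lt_iff₀ hε] at hkε
  obtain ⟨ρ, hρ_def⟩ : ∃ ρ : ℝ, ρ = 1 / (4 * k ^ 2) := ⟨_, rfl⟩
  have hρ : 0 < ρ := by rw [hρ_def]; positivity
  have hρ_le : ρ ≤ 1 := by
    rw [hρ_def, div_le_one (by positivity)]
    nlinarith
  obtain ⟨c, hc_def⟩ : ∃ c : ℝ, c = ρ ^ Fintype.card W / (Fintype.card W + 1) := ⟨_, rfl⟩
  have hc : 0 < c := by rw [hc_def]; positivity
  have hc_le : c ≤ 1 := by
    rw [hc_def, div_le_one (by positivity)]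
    have h1 : ρ ^ Fintype.card W ≤ 1 := pow_le_one₀ hρ.le hρ_le
    have h2 : (0 : ℝ) ≤ Fintype.card W := Nat.cast_nonneg _
    linarith
  obtain ⟨μ, hμ_def⟩ : ∃ μ : ℝ, μ = 1 / ((4 / c) ^ (2 * k) * (8 * k ^ 2)) := ⟨_, rfl⟩
  have hμ : 0 < μ := by rw [hμ_def]; positivity
  refine ⟨μ ^ Fintype.card W, k * μ / 2, by positivity, by positivity, ?_⟩
  intro V _ _ G _ hcopies
  rw [← mul_pow] at hcopies
  rcases isEmpty_or_nonempty V with hV | ⟨⟨v₀⟩⟩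
  · exact ⟨∅, by simp, by simp⟩
  have hn : (0 : ℝ) < Fintype.card V := by exact_mod_cast Fintype.card_pos_iff.2 ⟨v₀⟩
  obtain ⟨q, hq_def⟩ : ∃ q : ℝ, q = μ * Fintype.card V := ⟨_, rfl⟩
  have hq : 0 < q := by rw [hq_def]; positivity
  have hδ : k * μ / 2 * (Fintype.card V : ℝ) = k * q / 2 := by rw [hq_def]; ring
  rw [← hq_def] at hcopies
  rw [mul_assoc, hδ]
  rcases le_or_gt ((k : ℝ) * q / 2) 1 with hsmall | hbig
  · refine ⟨{v₀}, by simpa using hsmall, Or.inl ?_⟩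
    intro v hv
    rw [mem_singleton] at hv
    subst hv
    rw [filter_singleton, if_neg (G.loopless.irrefl v), card_empty, Nat.cast_zero]
    positivity
  obtain ⟨m, hm_def⟩ : ∃ m : ℕ, m = ⌈q⌉₊ := ⟨_, rfl⟩
  have hm : 0 < m := hm_def ▸ Nat.ceil_pos.2 hq
  have hqm : q ≤ m := hm_def ▸ Nat.le_ceil q
  have hmq : (m : ℝ) - 1 ≤ q := by
    have := (Nat.ceil_lt_add_one hq.le).le
    rw [← hm_def] at this
    linarith
  have hlarge : (4 / c) ^ (2 * k) * (4 * k * m) ≤ #(univ : Finset V) := by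
    have hmk : (m : ℝ) ≤ 2 * k * q := by nlinarith
    calc (4 / c) ^ (2 * k) * (4 * k * m) ≤ (4 / c) ^ (2 * k) * (4 * k * (2 * k * q)) := by gcongr
      _ = (4 / c) ^ (2 * k) * (8 * k ^ 2) * μ * Fintype.card V := by rw [hq_def]; ring
      _ = Fintype.card V := by rw [hμ_def]; field_simp
      _ = #(univ : Finset V) := by rw [card_univ]
  obtain ⟨s, t, Y, -, Z, -, hs, ht, hsk, htk, hY, hZ, hst⟩ :=
    exists_isSparseUnion (graphOrCompl G) hc hc_le hρ hm hk hqm hmq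
      (fun S hS => by
        rw [hc_def] at hS ⊢
        exact exists_sparse_pair H G hρ hρ_le hq hcopies S hS) (2 * k) univ hlarge true
  have hmany : k ≤ s ∨ k ≤ t := by
    by_contra! hlt
    have h1 : s * t < k * k := Nat.mul_lt_mul'' hlt.1 hlt.2
    have h2 : k * k ≤ 2 ^ (2 * k) := by
      rw [two_mul, pow_add]
      exact Nat.mul_le_mul Nat.lt_two_pow_self.le Nat.lt_two_pow_self.le
    omega
  have hfinal : ∀ (b : Bool) (r : ℕ) (X : Finset V), 0 < r → r ≤ 2 * k → k ≤ r →
      IsSparseUnion (graphOrCompl G b) m q (2 * ρ) r X →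
      ∃ X' : Finset V, (k : ℝ) * q / 2 ≤ #X' ∧
        ∀ v ∈ X', (#(nbrsIn (graphOrCompl G b) v X') : ℝ) ≤ ε * (k * q / 2) := by
    classical
    intro b r X hr hrk hkr hX
    have hXcard : (#X : ℝ) = r * m := by rw [hX.card_eq]; push_cast; rfl
    have hrk' : (r : ℝ) ≤ 2 * k := by exact_mod_cast hrk
    have hkr' : (k : ℝ) ≤ r := by exact_mod_cast hkr
    have hhalf := half_card_le_card_filter (graphOrCompl G b) X X
      (D := q + 2 * ρ * (r * m)) (by positivity) (by
        rw [hXcard]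
        exact hX.adjPairs_le.trans_eq (by ring))
    refine ⟨_, le_trans ?_ hhalf, fun v hv => ?_⟩
    · rw [hXcard]
      gcongr
    · have hsub := card_le_card (filter_subset_filter ((graphOrCompl G b).Adj v)
        (filter_subset (fun v => (#(nbrsIn (graphOrCompl G b) v X) : ℝ) ≤
          2 * (q + 2 * ρ * (r * m))) X))
      refine (Nat.cast_le.2 hsub).trans ((mem_filter.1 hv).2.trans ?_)
      have hdens : 2 * ρ * (r * m) ≤ 3 / 2 * q := by
        calc 2 * ρ * (r * m) ≤ 2 * ρ * (2 * k * (q + 1)) := by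
              gcongr
              linarith
          _ = (q + 1) / k := by rw [hρ_def]; field_simp; norm_num
          _ ≤ 3 / 2 * q := by
            rw [div_le_iff₀ hk']
            nlinarith
      nlinarith
  rcases hmany with hks | hkt
  · obtain ⟨X, hXcard, hX⟩ := hfinal true s Y hs hsk hks hY
    refine ⟨X, hXcard, Or.inl fun v hv => ?_⟩
    convert hX v hv
    ext x
    simp [mem_nbrsIn, graphOrCompl]
  · obtain ⟨X, hXcard, hX⟩ := hfinal false t Z ht htk hkt hZ
    refine ⟨X, hXcard, Or.inr fun v hv => ?_⟩
    convert hX v hv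
    ext x
    simp [mem_nbrsIn, graphOrCompl]
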